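/- arXiv:2202.00127 — 3 statements merged into one kernel-verified Lean document; each statement's English description precedes it below -/
import Mathlib

section
/- Let f_L, f_S : ℝ → ℝ be continuous with f_S(t) > 0 and f_S(t) < f_L(t) for all t (exchange L is more liquid than exchange S), and let P₀ < P*. Define E_L = ∫_{P₀}^{P*} P·f_L(P) dP + P*·∫_{P₀}^{P*} f_S(P) dP and E_S = P*·∫_{P₀}^{P*} f_L(P) dP + ∫_{P₀}^{P*} P·f_S(P) dP. Then E_L < E_S. -/
/-!
Filling an order at book prices instead of at the limit `P*` saves `∫ (P* - P) f(P) dP`.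
Front-running costs the investor this saving on the exchange traded second, and since the weight
`P* - P` is positive on `(P₀, P*)`, the larger density has the larger saving to lose.
-/

open MeasureTheory Set

section

variable {f g : ℝ → ℝ} {a b : ℝ}

theorem intervalIntegral_const_sub_id_mul {μ : Measure ℝ} (hf : IntervalIntegrable f μ a b)
    (c : ℝ) :
    ∫ x in a..b, (c - x) * f x ∂μ = c * (∫ x in a..b, f x ∂μ) - ∫ x in a..b, x * f x ∂μ := by
  simp only [sub_mul]
  rw [intervalIntegral.integral_sub (hf.const_mul c) (hf.continuousOn_mul (by fun_prop)),
    intervalIntegral.integral_const_mul]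

theorem intervalIntegral_lt_intervalIntegral_of_lt_on_Ioo (hab : a < b)
    (hf : IntervalIntegrable f volume a b) (hg : IntervalIntegrable g volume a b)
    (hlt : ∀ x ∈ Ioo a b, f x < g x) :
    ∫ x in a..b, f x < ∫ x in a..b, g x := by
  rw [← sub_pos, ← intervalIntegral.integral_sub hg hf]
  exact intervalIntegral.intervalIntegral_pos_of_pos_on (hg.sub hf)
    (fun x hx => sub_pos.2 (hlt x hx)) hab

end

theorem E_L_lt_E_S_general {fL fS : ℝ → ℝ} {P₀ Pstar : ℝ} (hP : P₀ < Pstar)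
    (hfL : IntervalIntegrable fL volume P₀ Pstar) (hfS : IntervalIntegrable fS volume P₀ Pstar)
    (hSL : ∀ P ∈ Ioo P₀ Pstar, fS P < fL P) :
    (∫ P in P₀..Pstar, P * fL P) + Pstar * (∫ P in P₀..Pstar, fS P)
      < Pstar * (∫ P in P₀..Pstar, fL P) + (∫ P in P₀..Pstar, P * fS P) := by
  have hweight : ContinuousOn (fun P => Pstar - P) (uIcc P₀ Pstar) := by fun_prop
  have hsaving : ∫ P in P₀..Pstar, (Pstar - P) * fS P < ∫ P in P₀..Pstar, (Pstar - P) * fL P :=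
    intervalIntegral_lt_intervalIntegral_of_lt_on_Ioo hP (hfS.continuousOn_mul hweight)
      (hfL.continuousOn_mul hweight)
      fun _ hPmem => mul_lt_mul_of_pos_left (hSL _ hPmem) (sub_pos.2 hPmem.2)
  rw [intervalIntegral_const_sub_id_mul hfS, intervalIntegral_const_sub_id_mul hfL] at hsaving
  linarith

/-- If exchange L is more liquid than exchange S,
i.e. `0 < f_S(t) < f_L(t)` for all `t`, then the expenditure when the trade
is revealed early on L, `E_L = ∫_{P₀}^{P*} P·f_L + P*·∫_{P₀}^{P*} f_S`,
is strictly smaller than the expenditure when it is revealed early on S,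
`E_S = P*·∫_{P₀}^{P*} f_L + ∫_{P₀}^{P*} P·f_S`. -/
theorem E_L_lt_E_S
    (fL fS : ℝ → ℝ) (hfL : Continuous fL) (hfS : Continuous fS)
    (hfSpos : ∀ t, 0 < fS t) (hSL : ∀ t, fS t < fL t)
    (P₀ Pstar : ℝ) (hP : P₀ < Pstar) :
    (∫ P in P₀..Pstar, P * fL P) + Pstar * (∫ P in P₀..Pstar, fS P)
      < Pstar * (∫ P in P₀..Pstar, fL P) + (∫ P in P₀..Pstar, P * fS P) :=
  E_L_lt_E_S_general hP (hfL.intervalIntegrable _ _) (hfS.intervalIntegrable _ _)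
    fun P _ => hSL P
end

section
/- Let π_L′, π_S′, E_sim, E_L, E_S be real numbers with E_sim < E_L < E_S, π_L′ ≥ 0, π_S′ ≤ 0, not both π_L′ and π_S′ equal to zero, and suppose the first-order condition π_L′·(E_L − E_sim) + π_S′·(E_S − E_sim) = 0 holds. Then π_sim′ := −(π_L′ + π_S′) < 0 and π_L′ > −π_S′, i.e. |π_L′| > |π_S′|. (At an interior optimal delay, the trader does not maximize the probability of simultaneous execution but leans toward early revelation on the large exchange.) -/
theorem right_ne_zero_of_mul_add_mul_eq_zero {R : Type*} [NonUnitalNonAssocSemiring R]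
    [NoZeroDivisors R] {p q a b : R} (ha : a ≠ 0) (hpq : ¬(p = 0 ∧ q = 0))
    (h : p * a + q * b = 0) : q ≠ 0 := by
  rintro rfl
  have hpa : p * a = 0 := by rwa [zero_mul, add_zero] at h
  exact hpq ⟨(mul_eq_zero.mp hpa).resolve_right ha, rfl⟩

section OrderedRing

variable {R : Type*} [Ring R] [LinearOrder R] [IsStrictOrderedRing R]

theorem neg_lt_of_mul_add_mul_eq_zero {p q a b : R} (hq : q < 0) (ha : 0 ≤ a) (hab : a < b)
    (h : p * a + q * b = 0) : -q < p := by
  refine lt_of_mul_lt_mul_right ?_ ha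
  calc
    -q * a < -q * b := mul_lt_mul_of_pos_left hab (neg_pos.mpr hq)
    _ = -(q * b) := neg_mul q b
    _ = p * a := (eq_neg_of_add_eq_zero_left h).symm

theorem delay_leans_toward_large_exchange_general {πL' πS' Esim EL ES : R}
    (h1 : Esim < EL) (h2 : EL < ES) (hS : πS' ≤ 0) (hne : ¬(πL' = 0 ∧ πS' = 0))
    (hFOC : πL' * (EL - Esim) + πS' * (ES - Esim) = 0) :
    -(πL' + πS') < 0 ∧ πL' > -πS' := by
  have hcost : 0 < EL - Esim := sub_pos.mpr h1
  have hS_neg : πS' < 0 :=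
    hS.lt_of_ne (right_ne_zero_of_mul_add_mul_eq_zero hcost.ne' hne hFOC)
  have hlean : -πS' < πL' :=
    neg_lt_of_mul_add_mul_eq_zero hS_neg hcost.le (sub_lt_sub_right h2 Esim) hFOC
  exact ⟨neg_lt_zero.mpr (neg_lt_iff_pos_add.mp hlean), hlean⟩

end OrderedRing

/-- At an interior optimal delay, with `E_sim < E_L < E_S`,
`π_L′ ≥ 0`, `π_S′ ≤ 0`, not both derivatives zero, and the first-order condition
`π_L′·(E_L − E_sim) + π_S′·(E_S − E_sim) = 0`, we get
`π_sim′ = −(π_L′ + π_S′) < 0` and `π_L′ > −π_S′` (i.e. `|π_L′| > |π_S′|`). -/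
theorem delay_leans_toward_large_exchange
    (πL' πS' Esim EL ES : ℝ)
    (h1 : Esim < EL) (h2 : EL < ES)
    (hL : 0 ≤ πL') (hS : πS' ≤ 0)
    (hne : ¬(πL' = 0 ∧ πS' = 0))
    (hFOC : πL' * (EL - Esim) + πS' * (ES - Esim) = 0) :
    -(πL' + πS') < 0 ∧ πL' > -πS' :=
  delay_leans_toward_large_exchange_general h1 h2 hS hne hFOC
end

section
/- Let H > 0, s > 0, and let A, B > 0 be real numbers (A = E_L − E_sim and B = E_S − E_sim), and let φ(z) = exp(−z²/2)/√(2π) be the standard normal density. Then a real number γ satisfies the first-order condition φ((H − γ)/√s)·A = φ((−γ − H)/√s)·B if and only if γ = (s/(2H))·ln(B/A). In particular, with s = σ_S² + σ_L², the optimal order delay is δ* = μ_L − μ_S + ((σ_S² + σ_L²)/(2H))·ln((E_S − E_sim)/(E_L − E_sim)), so that γ* = μ_S − μ_L + δ* = ((σ_S² + σ_L²)/(2H))·ln((E_S − E_sim)/(E_L − E_sim)). -/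
/-!
The ratio of the standard normal density at two points is `φ x / φ y = exp ((y² - x²) / 2)`, so the
first-order condition prescribes the difference of the squares of its two arguments. In that
difference the terms quadratic in `γ` cancel, which leaves a linear equation for `γ`.
-/

/-- The density of the standard normal distribution, `φ(z) = exp(−z²/2)/√(2π)`. -/
noncomputable def stdNormalPDF (z : ℝ) : ℝ :=
  Real.exp (-z ^ 2 / 2) / Real.sqrt (2 * Real.pi)

theorem stdNormalPDF_pos (z : ℝ) : 0 < stdNormalPDF z := by
  unfold stdNormalPDF
  positivity

theorem stdNormalPDF_div_stdNormalPDF (x y : ℝ) :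
    stdNormalPDF x / stdNormalPDF y = Real.exp ((y ^ 2 - x ^ 2) / 2) := by
  have h_norm : Real.sqrt (2 * Real.pi) ≠ 0 := by positivity
  unfold stdNormalPDF
  rw [div_div_div_cancel_right₀ h_norm, ← Real.exp_sub]
  congr 1
  ring

theorem stdNormalPDF_mul_eq_stdNormalPDF_mul_iff {A B : ℝ} (hBA : 0 < B / A) (x y : ℝ) :
    stdNormalPDF x * A = stdNormalPDF y * B ↔ (y ^ 2 - x ^ 2) / 2 = Real.log (B / A) := by
  have hA : A ≠ 0 := (div_ne_zero_iff.1 hBA.ne').2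
  calc stdNormalPDF x * A = stdNormalPDF y * B
      ↔ stdNormalPDF x / stdNormalPDF y = B / A := by
        rw [div_eq_div_iff (stdNormalPDF_pos y).ne' hA, mul_comm B]
    _ ↔ Real.exp ((y ^ 2 - x ^ 2) / 2) = Real.exp (Real.log (B / A)) := by
        rw [stdNormalPDF_div_stdNormalPDF, Real.exp_log hBA]
    _ ↔ (y ^ 2 - x ^ 2) / 2 = Real.log (B / A) := Real.exp_eq_exp

theorem half_sq_div_sub_sq_div (H γ σ : ℝ) :
    (((-γ - H) / σ) ^ 2 - ((H - γ) / σ) ^ 2) / 2 = γ / (σ ^ 2 / (2 * H)) := by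
  rw [div_div_eq_mul_div]
  ring

theorem optimal_order_delay_general {H s A B : ℝ} (hH : H ≠ 0) (hs : 0 < s) (hBA : 0 < B / A)
    (γ : ℝ) :
    stdNormalPDF ((H - γ) / Real.sqrt s) * A = stdNormalPDF ((-γ - H) / Real.sqrt s) * B
      ↔ γ = s / (2 * H) * Real.log (B / A) := by
  have h_slope : s / (2 * H) ≠ 0 := by positivity
  rw [stdNormalPDF_mul_eq_stdNormalPDF_mul_iff hBA, half_sq_div_sub_sq_div,
    Real.sq_sqrt hs.le, div_eq_iff h_slope, mul_comm]

/-- For `H > 0`, `s > 0` and `A, B > 0` (with `A = E_L − E_sim`,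
`B = E_S − E_sim`), a real `γ` satisfies the first-order condition
`φ((H − γ)/√s)·A = φ((−γ − H)/√s)·B` iff `γ = (s/(2H))·ln(B/A)`.  In particular,
with `s = σ_S² + σ_L²`, the optimal delay is
`δ* = μ_L − μ_S + ((σ_S² + σ_L²)/(2H))·ln((E_S − E_sim)/(E_L − E_sim))`, so that
`γ* = μ_S − μ_L + δ*` equals `((σ_S² + σ_L²)/(2H))·ln((E_S − E_sim)/(E_L − E_sim))`. -/
theorem optimal_order_delay
    (H s A B : ℝ) (hH : 0 < H) (hs : 0 < s) (hA : 0 < A) (hB : 0 < B) :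
    (∀ γ : ℝ,
        stdNormalPDF ((H - γ) / Real.sqrt s) * A
            = stdNormalPDF ((-γ - H) / Real.sqrt s) * B
          ↔ γ = s / (2 * H) * Real.log (B / A)) ∧
      (∀ μS μL σS σL Esim EL ES δstar : ℝ,
        s = σS ^ 2 + σL ^ 2 → A = EL - Esim → B = ES - Esim →
        δstar = μL - μS + (σS ^ 2 + σL ^ 2) / (2 * H)
            * Real.log ((ES - Esim) / (EL - Esim)) →
        μS - μL + δstar
          = (σS ^ 2 + σL ^ 2) / (2 * H) * Real.log ((ES - Esim) / (EL - Esim))) := by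
  refine ⟨optimal_order_delay_general hH.ne' hs (div_pos hB hA), ?_⟩
  rintro μS μL σS σL Esim EL ES δstar - - - rfl
  ring
end
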